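/- Let X be a real Banach space and let Y ⊆ X* be a total linear subspace such that X equipped with the Mackey topology μ(X,Y) is quasi-complete. Let M : Σ → b(X) be a set-valued map defined on a σ-algebra Σ such that: (i) M(A) is relatively σ(X,Y)-compact for every A ∈ Σ; and (ii) the support map s(x*,M) is countably additive for every x* ∈ Y. Then the set ⋃_{A∈Σ} M(A) is relatively σ(X,Y)-compact. -/

import Mathlib

/-!
Let `C` be the `σ(X, Y)`-closure of the union of the values of `M`. For `f ∈ Y` the real set
function `A ↦ s(f, M A)` is a signed measure, so it is maximal at the positive part `P` of a Hahn
decomposition; as the closure of `M P` is compact, `f` attains its supremum over `C` there. What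
remains is a version of James' theorem: if every `f ∈ Y` attains its supremum on the
`σ(X, Y)`-closed set `C` and `X` is Mackey quasi-complete, then `C` is `σ(X, Y)`-compact.

Every ultrafilter on `C` converges pointwise on `Y` to a linear functional `φ`, and the point is
that `φ` is the evaluation at some `x`. Let `K ⊆ Y` be absolutely convex and weak*-compact; by
Baire's theorem `K` is uniformly bounded on `C`.

* If `φ` were not weak*-continuous on `K`, an alternating choice would give `f n ∈ K` and `x n ∈ C`
  with `f i (x n)` large for `i < n` and small for `i > n`. This is refuted as in Pryce's proof of
  James' theorem. Let `p` be the support functional of `C`. There is a filter along which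
  `p (h - w)` does not depend on the choice of `w` between the lower and upper limits of `f`.
  Choosing near-minimizing convex combinations `v n` of tails of `f` makes
  `p (∑ k < n, r ^ k • (v k - w))` grow by a fixed multiple of `r ^ n` for some limit `w` of `v`.
  At a point of `C` where `∑ r ^ k • (v k - w)` attains its supremum, all `v n - w` are then bounded
  below by one positive constant, a contradiction.
* As `φ` is continuous on `K`, Sion's minimax theorem makes it a uniform limit on `K` of evaluations
  at points of the convex hull of `C`.

So `φ` is a limit of points of the convex hull of `C` for the uniformity of `μ(X, Y)`. These points
lie in a Mackey-closed bounded set, which is complete, and `φ` is an evaluation.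
-/

/-- The topology `σ(X, Y)` of pointwise convergence on a set `Y ⊆ X*`. -/
def sigmaTop {X : Type*} [NormedAddCommGroup X] [NormedSpace ℝ X]
    (Y : Set (X →L[ℝ] ℝ)) : TopologicalSpace X :=
  TopologicalSpace.induced (fun x => fun y : Y => (y : X →L[ℝ] ℝ) x) Pi.topologicalSpace

/-- The weak* topology on `X*`: pointwise convergence on `X`. -/
def weakStarTop (X : Type*) [NormedAddCommGroup X] [NormedSpace ℝ X] :
    TopologicalSpace (X →L[ℝ] ℝ) :=
  TopologicalSpace.induced (fun f : X →L[ℝ] ℝ => fun x : X => f x) Pi.topologicalSpace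

/-- The family of absolutely convex, weak*-compact subsets of `Y ⊆ X*`. -/
def mackeyFamily {X : Type*} [NormedAddCommGroup X] [NormedSpace ℝ X]
    (Y : Submodule ℝ (X →L[ℝ] ℝ)) : Set (Set (X →L[ℝ] ℝ)) :=
  {S | S ⊆ (Y : Set (X →L[ℝ] ℝ)) ∧ Convex ℝ S ∧ Balanced ℝ S ∧
    @IsCompact (X →L[ℝ] ℝ) (weakStarTop X) S}

/-- The Mackey uniformity `μ(X, Y)`: the uniformity on `X` of uniform convergence on
absolutely convex weak*-compact subsets of `Y`. -/
noncomputable def mackeyUniformity {X : Type*} [NormedAddCommGroup X] [NormedSpace ℝ X]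
    (Y : Submodule ℝ (X →L[ℝ] ℝ)) : UniformSpace X :=
  UniformSpace.comap
    (fun x => UniformOnFun.ofFun (mackeyFamily Y) (fun f : X →L[ℝ] ℝ => f x))
    (UniformOnFun.uniformSpace (X →L[ℝ] ℝ) ℝ (mackeyFamily Y))

/-- The Mackey topology `μ(X, Y)`. -/
noncomputable def mackeyTop {X : Type*} [NormedAddCommGroup X] [NormedSpace ℝ X]
    (Y : Submodule ℝ (X →L[ℝ] ℝ)) : TopologicalSpace X :=
  (mackeyUniformity Y).toTopologicalSpace

/-- The support functional `s(x*, C) = sup x*(C)`. -/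
noncomputable def supportFn {X : Type*} [NormedAddCommGroup X] [NormedSpace ℝ X]
    (f : X →L[ℝ] ℝ) (C : Set X) : ℝ := sSup (f '' C)

/-- A set function on a σ-algebra, with values in a topological abelian monoid, is
countably additive. -/
def CountablyAdditive {Ω E : Type*} [MeasurableSpace Ω] [AddCommMonoid E]
    [TopologicalSpace E] (ν : Set Ω → E) : Prop :=
  ∀ A : ℕ → Set Ω, (∀ n, MeasurableSet (A n)) → Pairwise (Function.onFun Disjoint A) →
    HasSum (fun n => ν (A n)) (ν (⋃ n, A n))

open Filter Topology Set

/-! ### James' theorem -/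

section Selection

variable {E : Type*} [AddCommGroup E] [Module ℝ E]

theorem exists_forall_le_add {ι : Type*} {D : Set ι} (hD : D.Nonempty) {q : ι → ℝ}
    (hq : BddBelow (q '' D)) {η : ℝ} (hη : 0 < η) : ∃ v ∈ D, ∀ u ∈ D, q v ≤ q u + η := by
  obtain ⟨_, ⟨v, hv, rfl⟩, hlt⟩ :=
    exists_lt_of_csInf_lt (hD.image q) (lt_add_of_pos_right (sInf (q '' D)) hη)
  exact ⟨v, hv, fun u hu => hlt.le.trans (by gcongr; exact csInf_le hq (mem_image_of_mem q hu))⟩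

variable {p : E → ℝ} (hsmul : ∀ c : ℝ, 0 < c → ∀ x, p (c • x) = c * p x)
  (hadd : ∀ x y, p (x + y) ≤ p x + p y)
include hsmul hadd

theorem bddBelow_image_add_smul {D : Set E} {δ : ℝ} (hD : ∀ u ∈ D, δ ≤ p u) (h : E) {s : ℝ}
    (hs : 0 < s) : BddBelow ((fun u => p (h + s • u)) '' D) := by
  refine ⟨s * δ - p (-h), ?_⟩
  rintro _ ⟨u, hu, rfl⟩
  have hle : s * δ ≤ s * p u := mul_le_mul_of_nonneg_left (hD u hu) hs.le
  have := hadd (h + s • u) (-h)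
  rw [add_neg_cancel_comm, hsmul s hs] at this
  linarith

theorem add_mul_le_of_near_minimizer {h g u : E} {r s d d' : ℝ} (hr : 0 < r) (hs : 0 < s)
    (hd : p h + s * d ≤ p (h + s • ((1 / (1 + r)) • g + (r / (1 + r)) • u)))
    (hg : p (h + s • g) ≤
      p (h + s • ((1 / (1 + r)) • g + (r / (1 + r)) • u)) + s * r * (d - d')) :
    p (h + s • g) + s * r * d' ≤ p (h + s • g + (s * r) • u) := by
  have hr1 : 0 < 1 + r := by positivity
  set v := (1 / (1 + r)) • g + (r / (1 + r)) • u
  -- The weights of `v` make `h + s • v` a convex combination of `h + s • g + (s * r) • u` and `h`.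
  have hcomb : (1 + r) • (h + s • v) = h + s • g + (s * r) • u + r • h := by
    simp only [v, smul_add, smul_smul]
    match_scalars <;> field_simp
  have hle : (1 + r) * p (h + s • v) ≤ p (h + s • g + (s * r) • u) + r * p h := by
    rw [← hsmul _ hr1, hcomb, ← hsmul r hr]
    exact hadd _ _
  nlinarith

theorem exists_seq_add_mul_le_sum {D : ℕ → Set E} (hD : Antitone D) (hDc : ∀ n, Convex ℝ (D n))
    (hDn : ∀ n, (D n).Nonempty) {r δ : ℝ} (hr : 0 < r) (hδ : 0 < δ) (hgap : ∀ u ∈ D 0, δ ≤ p u) :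
    ∃ g : ℕ → E, (∀ n, g n ∈ D n) ∧ ∀ n, p (∑ k ∈ Finset.range n, r ^ k • g k) + r ^ n * (δ / 2) ≤
      p (∑ k ∈ Finset.range (n + 1), r ^ k • g k) := by
  -- Near-minimization loses part of the gap at every step, so `δ` is replaced by constants
  -- decreasing from `δ` to `δ / 2`.
  let d : ℕ → ℝ := fun n => δ / 2 + δ / 2 * (1 / 2) ^ n
  have hd : ∀ n, d (n + 1) < d n := fun n => by
    have : 0 < δ / 2 * (1 / 2) ^ n := by positivity
    simp only [d, pow_succ]
    linarith
  have hdδ : ∀ n, δ / 2 ≤ d n := fun n => le_add_of_nonneg_right (by positivity)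
  choose γ hγD hγ using fun n h => exists_forall_le_add (hDn n)
    (bddBelow_image_add_smul hsmul hadd (fun u hu => hgap u (hD n.zero_le hu)) h (pow_pos hr n))
    (mul_pos (mul_pos (pow_pos hr n) hr) (sub_pos.2 (hd n)))
  let H : ℕ → E := fun n => Nat.rec 0 (fun n h => h + r ^ n • γ n h) n
  have hH : ∀ n, H n = ∑ k ∈ Finset.range n, r ^ k • γ k (H k) := fun n => by
    induction n with
    | zero => rfl
    | succ n ih => rw [Finset.sum_range_succ, ← ih]
  have growth : ∀ n, ∀ u ∈ D n, p (H n) + r ^ n * d n ≤ p (H n + r ^ n • u) := fun n => by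
    induction n with
    | zero =>
      intro u hu
      have hp0 : p 0 = 0 := by linarith [hsmul 2 two_pos 0, congrArg p (smul_zero (2 : ℝ) (A := E))]
      simpa [H, d, hp0] using hgap u hu
    | succ n ih =>
      intro u hu
      have hv := hDc n (hγD n (H n)) (hD (Nat.le_succ n) hu) (a := 1 / (1 + r)) (b := r / (1 + r))
        (by positivity) (by positivity) (by field_simp)
      rw [pow_succ]
      exact add_mul_le_of_near_minimizer hsmul hadd hr (pow_pos hr n) (ih _ hv) (hγ n _ _ hv)
  refine ⟨fun n => γ n (H n), fun n => hγD n _, fun n => ?_⟩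
  rw [← hH, ← hH]
  calc p (H n) + r ^ n * (δ / 2) ≤ p (H n) + r ^ n * d n := by gcongr; exact hdδ n
    _ ≤ p (H (n + 1)) := growth n _ (hγD n _)

end Selection

section SupValue

variable {E T : Type*} [AddCommGroup E] [Module ℝ E] {e : E →ₗ[ℝ] T → ℝ}

/-- Every vector of `E`, regarded as a real function on `T` through `e`, attains its supremum: the
hypothesis of James' theorem. -/
def AttainsSup (e : E →ₗ[ℝ] T → ℝ) : Prop :=
  ∀ g, ∃ t, ∀ s, e g s ≤ e g t

/-- The supremum over `T` of the function `e g`; the support functional of `T` when `T` is a set of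
points on which the vectors of `E` are evaluated. -/
noncomputable def supValue (e : E →ₗ[ℝ] T → ℝ) (g : E) : ℝ :=
  ⨆ t, e g t

namespace AttainsSup

theorem le_supValue (he : AttainsSup e) (g : E) (t : T) : e g t ≤ supValue e g :=
  let ⟨s, hs⟩ := he g
  le_ciSup (f := e g) ⟨e g s, forall_mem_range.2 hs⟩ t

theorem exists_eq_supValue (he : AttainsSup e) (g : E) : ∃ t, e g t = supValue e g :=
  let ⟨t, ht⟩ := he g
  have : Nonempty T := ⟨t⟩
  ⟨t, (he.le_supValue g t).antisymm (ciSup_le ht)⟩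

theorem supValue_le (he : AttainsSup e) {g : E} {a : ℝ} (h : ∀ t, e g t ≤ a) : supValue e g ≤ a :=
  let ⟨t, ht⟩ := he.exists_eq_supValue g
  ht ▸ h t

theorem supValue_add_le (he : AttainsSup e) (g h : E) :
    supValue e (g + h) ≤ supValue e g + supValue e h :=
  he.supValue_le fun t => by
    simpa using add_le_add (he.le_supValue g t) (he.le_supValue h t)

theorem supValue_le_add_of_forall_le (he : AttainsSup e) {g h : E} {ε : ℝ}
    (hgh : ∀ t, e g t ≤ e h t + ε) : supValue e g ≤ supValue e h + ε :=
  he.supValue_le fun t => (hgh t).trans (by gcongr; exact he.le_supValue h t)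

theorem exists_forall_abs_le (he : AttainsSup e) (g : E) : ∃ c, ∀ t, |e g t| ≤ c :=
  ⟨max (supValue e g) (supValue e (-g)), fun t => abs_le'.2
    ⟨le_max_of_le_left (he.le_supValue g t),
      le_max_of_le_right (by simpa using he.le_supValue (-g) t)⟩⟩

end AttainsSup

theorem supValue_smul {c : ℝ} (hc : 0 ≤ c) (g : E) : supValue e (c • g) = c * supValue e g := by
  simp [supValue, Real.mul_iSup_of_nonneg hc]

end SupValue

section Pryce

variable {E T ι : Type*} [AddCommGroup E] [Module ℝ E] {e : E →ₗ[ℝ] T → ℝ}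

/-- The vectors lying, at every point of `T`, between the lower and the upper limit of `f` along
`F`. Closed intervals replace `liminf` and `limsup`, so that no boundedness is needed. -/
def betweenLimits (e : E →ₗ[ℝ] T → ℝ) (f : ι → E) (F : Filter ι) : Set E :=
  {w | ∀ t (S : Set ℝ), IsClosed S → Convex ℝ S → (∀ᶠ m in F, e (f m) t ∈ S) → e w t ∈ S}

theorem betweenLimits_mono {f : ι → E} {F G : Filter ι} (hFG : F ≤ G) :
    betweenLimits e f F ⊆ betweenLimits e f G :=
  fun _ hw t S hS hSc hf => hw t S hS hSc (hf.filter_mono hFG)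

theorem abs_le_of_mem_betweenLimits {f : ι → E} {F : Filter ι} {c : ℝ}
    (hf : ∀ n t, |e (f n) t| ≤ c) {w : E} (hw : w ∈ betweenLimits e f F) (t : T) :
    |e w t| ≤ c :=
  abs_le.2 <| hw t (Icc (-c) c) isClosed_Icc (convex_Icc _ _)
    (Eventually.of_forall fun m => abs_le.1 (hf m t))

theorem neBot_inf_principal_of_mem_betweenLimits {f : ι → E} {F : Filter ι} {w : E}
    (hw : w ∈ betweenLimits e f F) (t : T) {η : ℝ} (hη : 0 < η) :
    (F ⊓ 𝓟 {m | e (f m) t ≤ e w t + η}).NeBot := by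
  rw [← frequently_mem_iff_neBot]
  intro hlt
  have : e w t + η ≤ e w t := hw t (Ici (e w t + η)) isClosed_Ici (convex_Ici _)
    (hlt.mono fun m hm => mem_Ici.2 (not_le.1 hm).le)
  linarith

theorem AttainsSup.exists_inf_principal_supValue_sub_le (he : AttainsSup e) {f : ι → E} {c : ℝ}
    (hf : ∀ n t, |e (f n) t| ≤ c) (F : Filter ι) [F.NeBot] (h : E) {η : ℝ} (hη : 0 < η) :
    ∃ A : Set ι, (F ⊓ 𝓟 A).NeBot ∧ ∀ w ∈ betweenLimits e f F,
      ∀ w' ∈ betweenLimits e f (F ⊓ 𝓟 A), supValue e (h - w) ≤ supValue e (h - w') + η := by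
  rcases (betweenLimits e f F).eq_empty_or_nonempty with hempty | hne
  · exact ⟨univ, by simpa, by simp [hempty]⟩
  have hbdd : BddBelow ((fun w => -supValue e (h - w)) '' betweenLimits e f F) := by
    refine ⟨-(supValue e h + c), ?_⟩
    rintro _ ⟨w, hw, rfl⟩
    refine neg_le_neg (he.supValue_le_add_of_forall_le fun t => ?_)
    have := (abs_le.1 (abs_le_of_mem_betweenLimits hf hw t)).1
    simp only [map_sub, Pi.sub_apply]
    linarith
  -- Making `f` small where `h - w₀` attains its supremum, for a near-maximizer `w₀`, keeps
  -- `supValue e (h - w')` near its maximum for every remaining `w'`.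
  obtain ⟨w₀, hw₀, hmax⟩ := exists_forall_le_add hne hbdd (half_pos hη)
  obtain ⟨t, ht⟩ := he.exists_eq_supValue (h - w₀)
  refine ⟨{m | e (f m) t ≤ e w₀ t + η / 2},
    neBot_inf_principal_of_mem_betweenLimits hw₀ t (half_pos hη), fun w hw w' hw' => ?_⟩
  have hw't : e w' t ≤ e w₀ t + η / 2 :=
    hw' t (Iic _) isClosed_Iic (convex_Iic _) (mem_inf_of_right (mem_principal_self _))
  have hle := he.le_supValue (h - w') t
  simp only [map_sub, Pi.sub_apply] at ht hle
  linarith [hmax w hw]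

theorem AttainsSup.exists_filter_supValue_sub_le (he : AttainsSup e) {f : ℕ → E} {c : ℝ}
    (hf : ∀ n t, |e (f n) t| ≤ c) (h : ℕ → E) {η : ℕ → ℝ} (hη : ∀ n, 0 < η n) :
    ∃ F : Filter ℕ, F.NeBot ∧ F.IsCountablyGenerated ∧ F ≤ atTop ∧
      ∀ n, ∀ w ∈ betweenLimits e f F, ∀ w' ∈ betweenLimits e f F,
        supValue e (h n - w) ≤ supValue e (h n - w') + η n := by
  choose A hAne hA using fun (n : ℕ) (F : {F : Filter ℕ // F.NeBot}) =>
    have := F.2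
    he.exists_inf_principal_supValue_sub_le hf F.1 (h n) (hη n)
  let Φ : ℕ → {F : Filter ℕ // F.NeBot} := fun n =>
    Nat.rec ⟨atTop, inferInstance⟩ (fun n F => ⟨F.1 ⊓ 𝓟 (A n F), hAne n F⟩) n
  have hanti : Antitone fun n => (Φ n).1 := antitone_nat_of_succ_le fun n => inf_le_left
  have hcg : ∀ n, (Φ n).1.IsCountablyGenerated := fun n => by
    induction n with
    | zero => exact inferInstanceAs (atTop : Filter ℕ).IsCountablyGenerated
    | succ n ih => exact inferInstanceAs ((Φ n).1 ⊓ 𝓟 (A n (Φ n))).IsCountablyGenerated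
  exact ⟨⨅ n, (Φ n).1, iInf_neBot_of_directed' hanti.directed_ge fun n => (Φ n).2, inferInstance,
    iInf_le (fun n => (Φ n).1) 0, fun n w hw w' hw' => hA n (Φ n) w
      (betweenLimits_mono (iInf_le _ n) hw) w'
      (betweenLimits_mono (iInf_le (fun n => (Φ n).1) (n + 1)) hw')⟩

theorem exists_seq_dense_span (he : ∀ g, ∃ c, ∀ t, |e g t| ≤ c) {s : Set E} (hs : s.Countable) :
    ∃ d : ℕ → E, ∀ h ∈ Submodule.span ℝ s, ∀ ε > 0, ∃ n, ∀ t, |e h t - e (d n) t| ≤ ε := by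
  let _ : TopologicalSpace E := .induced (UniformFun.ofFun ∘ e) inferInstance
  have hind : IsInducing (UniformFun.ofFun ∘ e) := ⟨rfl⟩
  have : IsTopologicalAddGroup E :=
    let ofFun : (T → ℝ) →+ UniformFun T ℝ := AddMonoidHom.id _
    hind.topologicalAddGroup (ofFun.comp e.toAddMonoidHom)
  have : ContinuousSMul ℝ E :=
    UniformFun.continuousSMul_induced_of_range_bounded ℝ T ℝ E e hind fun g =>
      (NormedSpace.isVonNBounded_iff ℝ).2 <| (he g).elim fun c hc =>
        (Metric.isBounded_closedBall (x := (0 : ℝ)) (r := c)).subset <|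
          range_subset_iff.2 fun t => by simpa using hc t
  obtain ⟨D, hD, hspan⟩ := hs.isSeparable.span (R := ℝ)
  have hne : D.Nonempty := closure_nonempty_iff.1 ⟨0, hspan (Submodule.zero_mem _)⟩
  obtain ⟨d, rfl⟩ := hD.exists_eq_range hne
  refine ⟨d, fun h hh ε hε => ?_⟩
  have hmem : e ⁻¹' {u | ∀ t, (e h t, u t) ∈ {q : ℝ × ℝ | dist q.1 q.2 < ε}} ∈ 𝓝 h := by
    rw [hind.nhds_eq_comap]
    exact preimage_mem_comap
      ((UniformFun.hasBasis_nhds_of_basis T ℝ _ Metric.uniformity_basis_dist).mem_of_mem hε)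
  obtain ⟨_, hd, n, rfl⟩ := mem_closure_iff_nhds.1 (hspan hh) _ hmem
  exact ⟨n, fun t => (hd t).le⟩

theorem AttainsSup.exists_filter_supValue_sub_smul_eq (he : AttainsSup e) {f : ℕ → E} {c : ℝ}
    (hf : ∀ n t, |e (f n) t| ≤ c) :
    ∃ F : Filter ℕ, F.NeBot ∧ F.IsCountablyGenerated ∧ F ≤ atTop ∧
      ∀ h ∈ Submodule.span ℝ (range f), ∀ w ∈ betweenLimits e f F, ∀ w' ∈ betweenLimits e f F,
        ∀ b : ℝ, 0 ≤ b → supValue e (h - b • w) = supValue e (h - b • w') := by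
  obtain ⟨d, hd⟩ := exists_seq_dense_span he.exists_forall_abs_le (countable_range f)
  obtain ⟨F, hF, hFc, hFtop, hle⟩ := he.exists_filter_supValue_sub_le hf
    (fun n => d n.unpair.1) (η := fun n => 1 / (n.unpair.2 + 1 : ℝ)) fun n => by positivity
  have hspan : ∀ h ∈ Submodule.span ℝ (range f), ∀ w ∈ betweenLimits e f F,
      ∀ w' ∈ betweenLimits e f F, supValue e (h - w) ≤ supValue e (h - w') := by
    refine fun h hh w hw w' hw' => le_of_forall_pos_le_add fun ε hε => ?_
    obtain ⟨n, hn⟩ := hd h hh (ε / 3) (by positivity)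
    obtain ⟨k, hk⟩ := exists_nat_one_div_lt (show 0 < ε / 3 by positivity)
    have hdk := hle (n.pair k) w hw w' hw'
    rw [Nat.unpair_pair] at hdk
    have hhd : supValue e (h - w) ≤ supValue e (d n - w) + ε / 3 :=
      he.supValue_le_add_of_forall_le fun t => by simpa using by linarith [(abs_le.1 (hn t)).2]
    have hdh : supValue e (d n - w') ≤ supValue e (h - w') + ε / 3 :=
      he.supValue_le_add_of_forall_le fun t => by simpa using by linarith [(abs_le.1 (hn t)).1]
    linarith
  refine ⟨F, hF, hFc, hFtop, fun h hh w hw w' hw' b hb => ?_⟩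
  rcases hb.eq_or_lt with rfl | hpos
  · simp
  have hscale : ∀ v, h - b • v = b • (b⁻¹ • h - v) := fun v => by
    rw [smul_sub, smul_inv_smul₀ hpos.ne']
  have hbh := Submodule.smul_mem _ b⁻¹ hh
  rw [hscale, hscale, supValue_smul hb, supValue_smul hb,
    (hspan _ hbh w hw w' hw').antisymm (hspan _ hbh w' hw' w hw)]

end Pryce

section UniformBound

variable {E : Type*} [AddCommGroup E] [Module ℝ E] [TopologicalSpace E]
  [IsTopologicalAddGroup E] [ContinuousSMul ℝ E] {K : Set E}

theorem exists_forall_add_smul_sub_mem (hK : IsCompact K) {x : E} {O : Set E} (hO : O ∈ 𝓝 x) :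
    ∃ s ∈ Ioo (0 : ℝ) 1, ∀ y ∈ K, x + s • (y - x) ∈ O := by
  have hsmall : ∀ᶠ s : ℝ in 𝓝 0, ∀ y ∈ K, x + s • (y - x) ∈ O := by
    refine hK.eventually_forall_of_forall_eventually fun y _ => ?_
    have hcont : Continuous fun z : ℝ × E => x + z.1 • (z.2 - x) := by fun_prop
    exact hcont.tendsto' (0, y) x (by simp) hO
  obtain ⟨s, hs, hs01⟩ := ((hsmall.filter_mono nhdsWithin_le_nhds).and
    (Ioo_mem_nhdsGT (one_pos (α := ℝ)))).exists
  exact ⟨s, hs01, hs⟩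

theorem exists_forall_abs_le_of_isCompact {T : Type*} {e : E →ₗ[ℝ] T → ℝ} (he : Continuous e)
    (hK : IsCompact K) (hKc : Convex ℝ K) (hbd : ∀ f ∈ K, ∃ c, ∀ t, |e f t| ≤ c) :
    ∃ c, ∀ f ∈ K, ∀ t, |e f t| ≤ c := by
  rcases K.eq_empty_or_nonempty with rfl | hKne
  · exact ⟨0, by simp⟩
  have : CompactSpace K := isCompact_iff_compactSpace.1 hK
  have : Nonempty K := hKne.to_subtype
  let S : ℕ → Set K := fun n => {f | ∀ t, |e f t| ≤ n}
  have hSclosed : ∀ n, IsClosed (S n) := fun n => by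
    simp only [S, ofPred_forall]
    exact isClosed_iInter fun t => isClosed_le
      (((continuous_apply t).comp he).comp continuous_subtype_val).abs continuous_const
  have hSunion : ⋃ n, S n = univ := eq_univ_of_forall fun f => by
    obtain ⟨c, hc⟩ := hbd f f.2
    obtain ⟨n, hn⟩ := exists_nat_ge c
    exact mem_iUnion.2 ⟨n, fun t => (hc t).trans hn⟩
  obtain ⟨n, f₀, hf₀⟩ := nonempty_interior_of_iUnion_of_closed hSclosed hSunion
  obtain ⟨O, hO, hOS⟩ := mem_nhds_subtype _ _ _ |>.1 (mem_interior_iff_mem_nhds.1 hf₀)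
  -- A homothety of ratio `s` centred at `f₀` maps `K` into `O`, where the bound `n` holds.
  obtain ⟨s, ⟨hs0, hs1⟩, hs⟩ := exists_forall_add_smul_sub_mem hK hO
  refine ⟨2 * n / s, fun f hf t => (le_div_iff₀ hs0).2 ?_⟩
  have hn : |e (f₀ + s • (f - f₀)) t| ≤ n :=
    hOS (a := ⟨_, hKc.add_smul_sub_mem f₀.2 hf ⟨hs0.le, hs1.le⟩⟩) (hs f hf) t
  have hn₀ : |e f₀ t| ≤ n := interior_subset hf₀ t
  have hcomb : e f t * s = e (f₀ + s • (f - f₀)) t - (1 - s) * e f₀ t := by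
    simp only [map_add, map_smul, map_sub, Pi.add_apply, Pi.smul_apply, Pi.sub_apply, smul_eq_mul]
    ring
  calc |e f t| * s = |e (f₀ + s • (f - f₀)) t - (1 - s) * e f₀ t| := by
        rw [← hcomb, abs_mul, abs_of_pos hs0]
    _ ≤ |e (f₀ + s • (f - f₀)) t| + (1 - s) * |e f₀ t| := by
        rw [← abs_of_pos (sub_pos.2 hs1), ← abs_mul, abs_of_pos (sub_pos.2 hs1)]
        exact abs_sub _ _
    _ ≤ 2 * n := by nlinarith [abs_nonneg (e f₀ t)]

end UniformBound

section James

variable {E T : Type*} [AddCommGroup E] [Module ℝ E] {e : E →ₗ[ℝ] T → ℝ}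

theorem AttainsSup.exists_forall_le_of_hasSum (he : AttainsSup e) {v : ℕ → E} {G : E} {c r δ : ℝ}
    (hv : ∀ n t, |e (v n) t| ≤ c) (hr : 0 < r) (hr2 : r ≤ 1 / 2) (hrδ : 8 * c * r ≤ δ)
    (hG : ∀ t, HasSum (fun k => r ^ k * e (v k) t) (e G t))
    (hgrowth : ∀ n, supValue e (∑ k ∈ Finset.range n, r ^ k • v k) + r ^ n * δ ≤
      supValue e (∑ k ∈ Finset.range (n + 1), r ^ k • v k)) :
    ∃ t, ∀ n, δ / 2 ≤ e (v n) t := by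
  set S : ℕ → E := fun n => ∑ k ∈ Finset.range n, r ^ k • v k
  have hS : ∀ n t, e (S n) t = ∑ k ∈ Finset.range n, r ^ k * e (v k) t := fun n t => by
    simp [S]
  have htail : ∀ n t, |e (S (n + 1)) t - e G t| ≤ r ^ n * (δ / 4) := fun n t => by
    have hdist : ∀ k, dist (e (S k) t) (e (S (k + 1)) t) ≤ c * r ^ k := fun k => by
      rw [hS, hS, Finset.sum_range_succ, dist_self_add_right, norm_mul, norm_pow,
        Real.norm_of_nonneg hr.le, Real.norm_eq_abs, mul_comm]
      exact mul_le_mul_of_nonneg_right (hv k t) (by positivity)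
    have hc : 0 ≤ c := (abs_nonneg _).trans (hv 0 t)
    calc |e (S (n + 1)) t - e G t| ≤ c * r ^ (n + 1) / (1 - r) :=
          dist_le_of_le_geometric_of_tendsto r c (by linarith) hdist
            (by simpa only [hS] using (hG t).tendsto_sum_nat) (n + 1)
      _ ≤ c * r ^ (n + 1) / (1 / 2) := by gcongr; linarith
      _ = r ^ n * (2 * c * r) := by ring
      _ ≤ r ^ n * (δ / 4) := by gcongr; linarith
  obtain ⟨t, ht⟩ := he.exists_eq_supValue G
  refine ⟨t, fun n => le_of_mul_le_mul_left ?_ (pow_pos hr n)⟩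
  have hSG : supValue e (S (n + 1)) ≤ supValue e G + r ^ n * (δ / 4) :=
    he.supValue_le_add_of_forall_le fun s => by linarith [(abs_le.1 (htail n s)).2]
  have hstep : e (S (n + 1)) t = e (S n) t + r ^ n * e (v n) t := by
    rw [hS, hS, Finset.sum_range_succ]
  linarith [he.le_supValue (S n) t, (abs_le.1 (htail n t)).1, hgrowth n]

theorem AttainsSup.le_supValue_sub (he : AttainsSup e) {f : ℕ → E} {F : Filter ℕ}
    (hF : F ≤ atTop) {x : ℕ → T} {a b : ℝ} (hb : ∀ i n, i < n → b ≤ e (f i) (x n))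
    (ha : ∀ i n, i < n → e (f n) (x i) ≤ a) {u w : E} (hu : u ∈ convexHull ℝ (range f))
    (hw : w ∈ betweenLimits e f F) : b - a ≤ supValue e (u - w) := by
  have hev : ∀ᶠ n in atTop, b ≤ e u (x n) := by
    refine convexHull_min ?_ (t := {u | ∀ᶠ n in atTop, b ≤ e u (x n)}) ?_ hu
    · rintro _ ⟨i, rfl⟩
      filter_upwards [eventually_gt_atTop i] with n hn using hb i n hn
    · intro u hu v hv s t hs ht hst
      filter_upwards [hu, hv] with n hun hvn
      simpa using convex_Ici b hun hvn hs ht hst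
  obtain ⟨n, hn⟩ := hev.exists
  have hwn : e w (x n) ≤ a := hw (x n) (Iic a) isClosed_Iic (convex_Iic a)
    (hF ((eventually_gt_atTop n).mono fun m hm => ha n m hm))
  have := he.le_supValue (u - w) (x n)
  simp only [map_sub, Pi.sub_apply] at this
  linarith

theorem exists_tendsto_hyperfilter_of_isCompact {Z : Type*} [TopologicalSpace Z] {K : Set Z}
    (hK : IsCompact K) {g : ℕ → Z} (hg : ∀ n, g n ∈ K) :
    ∃ w ∈ K, Tendsto g (hyperfilter ℕ) (𝓝 w) :=
  hK.ultrafilter_le_nhds' ((hyperfilter ℕ).map g) (mem_map.2 (univ_mem' hg))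

variable [TopologicalSpace E] (hec : Continuous e) {K : Set E}
include hec

theorem mem_betweenLimits_of_tendsto {ι : Type*} {f : ι → E} {F : Filter ι} {U : ℕ → Set ι}
    (hU : F.HasAntitoneBasis U) {g : ℕ → E} (hg : ∀ n, g n ∈ convexHull ℝ (f '' U n)) {w : E}
    (hw : Tendsto g (hyperfilter ℕ) (𝓝 w)) : w ∈ betweenLimits e f F := by
  intro t S hS hSc hfS
  obtain ⟨N, hN⟩ := hU.mem_iff.1 hfS
  have hgS : ∀ᶠ n in atTop, e (g n) t ∈ S := by
    filter_upwards [eventually_ge_atTop N] with n hn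
    refine convexHull_min ?_ (hSc.linear_preimage (LinearMap.proj t ∘ₗ e)) (hg n)
    rintro _ ⟨m, hm, rfl⟩
    exact hN (hU.antitone hn hm)
  exact hS.mem_of_tendsto (((continuous_apply t).comp hec).tendsto w |>.comp hw)
    (hgS.filter_mono Nat.hyperfilter_le_atTop)

theorem exists_forall_hasSum_of_isCompact (hK : IsCompact K) (hKc : Convex ℝ K) {v : ℕ → E}
    (hv : ∀ n, v n ∈ K) {a : ℕ → ℝ} (ha : ∀ n, 0 < a n) (hsum : Summable a) :
    ∃ G, ∀ t, HasSum (fun k => a k * e (v k) t) (e G t) := by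
  have hpos : ∀ n, 0 < ∑ k ∈ Finset.range (n + 1), a k := fun n =>
    Finset.sum_pos (fun k _ => ha k) Finset.nonempty_range_add_one
  obtain ⟨u, -, hu⟩ := exists_tendsto_hyperfilter_of_isCompact hK
    (g := fun n => (Finset.range (n + 1)).centerMass a v) fun n =>
      hKc.centerMass_mem (fun k _ => (ha k).le) (hpos n) fun k _ => hv k
  refine ⟨(∑' k, a k) • u, fun t => ?_⟩
  have het : Continuous fun g => e g t := (continuous_apply t).comp hec
  obtain ⟨c, hc⟩ := hK.exists_bound_of_continuousOn het.continuousOn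
  have hsum' : Summable fun k => a k * e (v k) t :=
    (hsum.mul_right c).of_norm_bounded fun k => by
      rw [norm_mul, Real.norm_of_nonneg (ha k).le]
      exact mul_le_mul_of_nonneg_left (hc _ (hv k)) (ha k).le
  have hlim : Tendsto (fun n => ∑ k ∈ Finset.range (n + 1), a k * e (v k) t) (hyperfilter ℕ)
      (𝓝 ((∑' k, a k) * e u t)) := by
    have hprod := ((hsum.hasSum.tendsto_sum_nat.comp (tendsto_add_atTop_nat 1)).mono_left
      Nat.hyperfilter_le_atTop).mul ((het.tendsto u).comp hu)
    refine hprod.congr fun n => ?_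
    simp [Finset.centerMass, mul_inv_cancel_left₀ (hpos n).ne']
  have huniq := tendsto_nhds_unique hlim
    ((hsum'.hasSum.tendsto_sum_nat.comp (tendsto_add_atTop_nat 1)).mono_left
      Nat.hyperfilter_le_atTop)
  simpa [huniq] using hsum'.hasSum

theorem AttainsSup.exists_tendsto_add_mul_le_sum (he : AttainsSup e) (hK : IsCompact K)
    (hKc : Convex ℝ K) {f : ℕ → E} (hf : ∀ n, f n ∈ K)
    {F : Filter ℕ} [F.NeBot] [F.IsCountablyGenerated]
    (hswap : ∀ h ∈ Submodule.span ℝ (range f), ∀ w ∈ betweenLimits e f F,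
      ∀ w' ∈ betweenLimits e f F, ∀ b : ℝ, 0 ≤ b → supValue e (h - b • w) = supValue e (h - b • w'))
    {r δ : ℝ} (hr : 0 < r) (hδ : 0 < δ)
    (hgap : ∀ u ∈ convexHull ℝ (range f), ∀ w ∈ betweenLimits e f F, δ ≤ supValue e (u - w)) :
    ∃ v : ℕ → E, (∀ n, v n ∈ K) ∧ ∃ w ∈ K, Tendsto v (hyperfilter ℕ) (𝓝 w) ∧
      ∀ n, supValue e (∑ k ∈ Finset.range n, r ^ k • (v k - w)) + r ^ n * (δ / 2) ≤
        supValue e (∑ k ∈ Finset.range (n + 1), r ^ k • (v k - w)) := by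
  obtain ⟨U, hU⟩ := F.exists_antitone_basis
  set D : ℕ → Set E := fun n => convexHull ℝ (f '' U n)
  have hDK : ∀ n, D n ⊆ K := fun n => convexHull_min (image_subset_iff.2 fun m _ => hf m) hKc
  have hDf : ∀ n, D n ⊆ convexHull ℝ (range f) := fun n => convexHull_mono (image_subset_range _ _)
  have hD : Antitone D := fun m n hmn => convexHull_mono (image_mono (hU.antitone hmn))
  have hlim : ∀ v : ℕ → E, (∀ n, v n ∈ D n) →
      ∃ w ∈ K, Tendsto v (hyperfilter ℕ) (𝓝 w) ∧ w ∈ betweenLimits e f F := fun v hv =>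
    let ⟨w, hwK, hw⟩ := exists_tendsto_hyperfilter_of_isCompact hK fun n => hDK n (hv n)
    ⟨w, hwK, hw, mem_betweenLimits_of_tendsto hec hU hv hw⟩
  choose v₀ hv₀ using fun n =>
    ((Filter.nonempty_of_mem (hU.mem n)).image f).convexHull (𝕜 := ℝ)
  obtain ⟨w₀, -, -, hw₀⟩ := hlim v₀ hv₀
  -- The limit `w` of the chosen vectors is unknown during the choice; `w₀` takes its place, and
  -- `hswap` makes the two interchangeable afterwards.
  obtain ⟨g, hg, hgrowth⟩ := exists_seq_add_mul_le_sum (p := supValue e)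
    (D := fun n => (· + w₀) ⁻¹' D n)
    (fun s hs => supValue_smul hs.le) he.supValue_add_le (fun m n hmn => preimage_mono (hD hmn))
    (fun n => (convex_convexHull ℝ _).translate_preimage_left w₀)
    (fun n => ⟨v₀ n - w₀, by simpa using hv₀ n⟩) hr hδ
    (fun u hu => by simpa using hgap (u + w₀) (hDf 0 hu) w₀ hw₀)
  obtain ⟨w, hwK, hvw, hw⟩ := hlim (fun n => g n + w₀) hg
  have hsum : ∀ n, supValue e (∑ k ∈ Finset.range n, r ^ k • (g k + w₀ - w)) =
      supValue e (∑ k ∈ Finset.range n, r ^ k • g k) := fun n => by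
    have hspan : ∑ k ∈ Finset.range n, r ^ k • (g k + w₀) ∈ Submodule.span ℝ (range f) :=
      Submodule.sum_mem _ fun k _ => Submodule.smul_mem _ _
        (convexHull_min Submodule.subset_span (Submodule.convex _) (hDf k (hg k)))
    simpa [smul_sub, Finset.sum_add_distrib, Finset.sum_smul] using
      hswap _ hspan w hw w₀ hw₀ (∑ k ∈ Finset.range n, r ^ k) (by positivity)
  exact ⟨fun n => g n + w₀, fun n => hDK n (hg n), w, hwK, hvw, fun n => by
    simpa only [hsum] using hgrowth n⟩

variable [IsTopologicalAddGroup E] [ContinuousSMul ℝ E]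

theorem AttainsSup.le_of_triangular_bounds (he : AttainsSup e) (hK : IsCompact K)
    (hKc : Convex ℝ K) {f : ℕ → E} (hf : ∀ n, f n ∈ K) {x : ℕ → T} {a b : ℝ}
    (hb : ∀ i n, i < n → b ≤ e (f i) (x n)) (ha : ∀ i n, i < n → e (f n) (x i) ≤ a) : b ≤ a := by
  by_contra! hab
  obtain ⟨c, hc⟩ := exists_forall_abs_le_of_isCompact hec hK hKc fun f _ =>
    he.exists_forall_abs_le f
  obtain ⟨F, hF, hFc, hFtop, hswap⟩ := he.exists_filter_supValue_sub_smul_eq fun n => hc _ (hf n)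
  have hδ : 0 < b - a := sub_pos.2 hab
  obtain ⟨r, hr, hrle⟩ : ∃ r : ℝ, 0 < r ∧ r ≤ min (1 / 2) ((b - a) / (32 * (|c| + 1))) :=
    ⟨_, by positivity, le_rfl⟩
  have hr2 : r ≤ 1 / 2 := hrle.trans (min_le_left _ _)
  have hrδ : 8 * (c + c) * r ≤ (b - a) / 2 := by
    have := (le_div_iff₀ (by positivity)).1 (hrle.trans (min_le_right _ _))
    nlinarith [le_abs_self c]
  obtain ⟨v, hv, w, hw, hvw, hgrowth⟩ := he.exists_tendsto_add_mul_le_sum hec hK hKc hf hswap hr hδ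
    fun u hu w hw => he.le_supValue_sub hFtop hb ha hu hw
  obtain ⟨G, hG⟩ := exists_forall_hasSum_of_isCompact hec hK hKc hv (fun n => pow_pos hr n)
    (summable_geometric_of_lt_one hr.le (by linarith))
  obtain ⟨t, ht⟩ := he.exists_forall_le_of_hasSum (v := fun n => v n - w) (G := G - (1 - r)⁻¹ • w)
    (c := c + c)
    (fun n t => by simpa using (abs_sub _ _).trans (add_le_add (hc _ (hv n) t) (hc _ hw t)))
    hr hr2 hrδ
    (fun t => by
      simpa [mul_sub] using
        (hG t).sub ((hasSum_geometric_of_lt_one hr.le (by linarith)).mul_right (e w t)))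
    hgrowth
  have hlim : Tendsto (fun n => e (v n - w) t) (hyperfilter ℕ) (𝓝 0) := by
    simpa using ((((continuous_apply t).comp hec).tendsto w).comp hvw).sub_const (e w t)
  linarith [ge_of_tendsto' hlim ht]

variable {φ : E →ₗ[ℝ] ℝ} {l : Filter T} [l.NeBot] (hφ : ∀ f, Tendsto (e f) l (𝓝 (φ f)))
include hφ

theorem AttainsSup.exists_finset_forall_abs_lt (he : AttainsSup e) (hK : IsCompact K)
    (hKc : Convex ℝ K) (hKneg : ∀ f ∈ K, -f ∈ K) {ε : ℝ} (hε : 0 < ε) :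
    ∃ I : Finset T, ∀ f ∈ K, (∀ t ∈ I, |e f t| ≤ ε / 4) → |φ f| < ε := by
  classical
  by_contra! hlarge
  have hlarge' : ∀ I : Finset T, ∃ f ∈ K, (∀ t ∈ I, e f t ≤ ε / 4) ∧ ε ≤ φ f := fun I => by
    obtain ⟨f, hf, hI, hφf⟩ := hlarge I
    rcases le_abs.1 hφf with hpos | hneg
    · exact ⟨f, hf, fun t ht => (abs_le'.1 (hI t ht)).1, hpos⟩
    · exact ⟨-f, hKneg f hf, fun t ht => by simpa using (abs_le'.1 (hI t ht)).2, by simpa⟩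
  obtain ⟨z, hz, hzz⟩ := exists_seq_of_forall_finset_exists
    (fun z : E × T => z.1 ∈ K ∧ ε ≤ φ z.1)
    (fun z z' => ε / 2 ≤ e z.1 z'.2 ∧ e z'.1 z.2 ≤ ε / 4) fun s hs => by
      obtain ⟨f, hf, hI, hφf⟩ := hlarge' (s.image Prod.snd)
      have hnear : ∀ᶠ t in l, ∀ z ∈ s, ε / 2 ≤ e z.1 t := (eventually_all_finset s).2 fun z hz =>
        (hφ z.1).eventually_const_le ((half_lt_self hε).trans_le (hs z hz).2)
      obtain ⟨t, ht⟩ := hnear.exists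
      exact ⟨(f, t), ⟨hf, hφf⟩, fun z hz => ⟨ht z hz, hI _ (Finset.mem_image_of_mem _ hz)⟩⟩
  have := he.le_of_triangular_bounds hec hK hKc (f := fun n => (z n).1) (fun n => (hz n).1)
    (x := fun n => (z n).2) (fun i n hin => (hzz i n hin).1) fun i n hin => (hzz i n hin).2
  linarith

theorem AttainsSup.continuousOn_of_tendsto (he : AttainsSup e) (hK : IsCompact K)
    (hKc : Convex ℝ K) (hKneg : ∀ f ∈ K, -f ∈ K) : ContinuousOn φ K := by
  intro f₀ hf₀
  refine Metric.tendsto_nhds.2 fun ε hε => ?_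
  obtain ⟨I, hI⟩ := he.exists_finset_forall_abs_lt hec hφ hK hKc hKneg (half_pos hε)
  have hnear : ∀ᶠ f in 𝓝[K] f₀, ∀ t ∈ I, dist (e f t) (e f₀ t) < ε / 4 :=
    (eventually_all_finset I).2 fun t _ => nhdsWithin_le_nhds <|
      Metric.tendsto_nhds.1 (((continuous_apply t).comp hec).tendsto f₀) (ε / 4) (by positivity)
  filter_upwards [hnear, self_mem_nhdsWithin] with f hf hfK
  have hmid : (1 / 2 : ℝ) • f + (1 / 2 : ℝ) • -f₀ ∈ K :=
    hKc hfK (hKneg f₀ hf₀) (by norm_num) (by norm_num) (by norm_num)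
  have hlt := hI _ hmid fun t ht => by
    have := hf t ht
    rw [Real.dist_eq, abs_lt] at this
    simp only [map_add, map_smul, map_neg, Pi.add_apply, Pi.smul_apply, Pi.neg_apply, smul_eq_mul]
    exact abs_le.2 ⟨by linarith, by linarith⟩
  simp only [map_add, map_smul, map_neg, smul_eq_mul] at hlt
  rw [Real.dist_eq, abs_lt]
  rw [abs_lt] at hlt
  exact ⟨by linarith, by linarith⟩

end James

/-! ### Uniform approximation by convex combinations -/

section DualPair

variable {E X : Type*} [AddCommGroup E] [Module ℝ E] [TopologicalSpace E]
  [IsTopologicalAddGroup E] [ContinuousSMul ℝ E] [AddCommGroup X] [Module ℝ X] [TopologicalSpace X]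
  [IsTopologicalAddGroup X] [ContinuousSMul ℝ X] {B : E →ₗ[ℝ] X →ₗ[ℝ] ℝ}
  (hBE : ∀ x, Continuous fun f => B f x) (hBX : ∀ f, Continuous (B f))
  {K : Set E} {C : Set X}
include hBE hBX

theorem exists_mem_convexHull_forall_lt (hK : IsCompact K) (hKc : Convex ℝ K) (hKne : K.Nonempty)
    {ψ : E → ℝ} (hψ : ContinuousOn ψ K) (hψc : ConcaveOn ℝ K ψ)
    (hlt : ∀ f ∈ K, ∃ x ∈ C, ψ f < B f x) : ∃ x ∈ convexHull ℝ C, ∀ f ∈ K, ψ f < B f x := by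
  have hcont : ∀ x, ContinuousOn (fun f => B f x - ψ f) K := fun x =>
    (hBE x).continuousOn.sub hψ
  choose! ξ hξC hξ using hlt
  obtain ⟨s, hsK, hs⟩ := hK.elim_nhdsWithin_subcover (fun f => {g | 0 < B g (ξ f) - ψ g})
    fun f hf => (hcont (ξ f) f hf).eventually_const_lt (sub_pos.2 (hξ f hf))
  obtain ⟨x, hx, hpos⟩ := Sion.exists_lt_iInf_of_lt_iInf_of_finite (t := (0 : ℝ))
    (f := fun f x => B f x - ψ f) (Y := convexHull ℝ C) hKne hK
    (fun x _ => (hcont x).lowerSemicontinuousOn)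
    (fun x _ => (((B.flip x).convexOn hKc).sub hψc).quasiconvexOn)
    (convex_convexHull ℝ C)
    (fun f _ => ((hBX f).sub continuous_const).upperSemicontinuous.upperSemicontinuousOn _)
    (fun f _ => (((B f).concaveOn (convex_convexHull ℝ C)).sub
      (convexOn_const (ψ f) (convex_convexHull ℝ C))).quasiconcaveOn)
    hKc (s.finite_toSet.image ξ)
    (image_subset_iff.2 fun f hf => subset_convexHull ℝ C (hξC f (hsK f hf)))
    fun g hg => by
      obtain ⟨f, hf, hgf⟩ := mem_iUnion₂.1 (hs hg)
      exact ⟨ξ f, mem_image_of_mem ξ hf, hgf⟩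
  exact ⟨x, hx, fun f hf => sub_pos.1 (hpos f hf)⟩

theorem exists_mem_convexHull_forall_abs_sub_lt
    (hatt : ∀ f, ∃ x ∈ C, ∀ y ∈ C, B f y ≤ B f x) {l : Filter X} [l.NeBot] (hl : l ≤ 𝓟 C)
    {φ : E →ₗ[ℝ] ℝ} (hφ : ∀ f, Tendsto (B f) l (𝓝 (φ f))) (hK : IsCompact K) (hKc : Convex ℝ K)
    (hKneg : ∀ f ∈ K, -f ∈ K) {ε : ℝ} (hε : 0 < ε) :
    ∃ x ∈ convexHull ℝ C, ∀ f ∈ K, |B f x - φ f| < ε := by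
  rcases K.eq_empty_or_nonempty with rfl | hKne
  · obtain ⟨x, hx, -⟩ := hatt 0
    exact ⟨x, subset_convexHull ℝ C hx, by simp⟩
  let e : E →ₗ[ℝ] C → ℝ := LinearMap.pi fun x => B.flip x
  have he : AttainsSup e := fun f =>
    let ⟨x, hx, hmax⟩ := hatt f
    ⟨⟨x, hx⟩, fun y => hmax y y.2⟩
  have hec : Continuous e := continuous_pi fun x => hBE x
  have : (comap ((↑) : C → X) l).NeBot := comap_coe_neBot_of_le_principal hl
  have hcont : ContinuousOn φ K := he.continuousOn_of_tendsto hec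
    (fun f => (hφ f).comp tendsto_comap) hK hKc hKneg
  obtain ⟨x, hx, hlt⟩ := exists_mem_convexHull_forall_lt hBE hBX hK hKc hKne (C := C)
    (ψ := fun f => φ f - ε) (hcont.sub continuousOn_const)
    ((φ.concaveOn hKc).sub (convexOn_const ε hKc)) fun f _ => by
      obtain ⟨x, hxlt, hxC⟩ := (((hφ f).eventually_const_lt (sub_lt_self (φ f) hε)).and
        (hl (mem_principal_self C))).exists
      exact ⟨x, hxC, hxlt⟩
  refine ⟨x, hx, fun f hf => abs_lt.2 ⟨by linarith [hlt f hf], ?_⟩⟩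
  have hneg := hlt (-f) (hKneg f hf)
  simp only [map_neg, LinearMap.neg_apply] at hneg
  linarith

end DualPair

/-! ### The Mackey topology -/

section UniformConvergence

variable {Z α : Type*} {𝔖 : Set (Set α)} {e : Z → α → ℝ}

/-- The uniformity on `Z` of uniform convergence of `e` on the members of `𝔖`; the Mackey uniformity
is the case where `e` is the evaluation. -/
@[reducible]
def unifOn (𝔖 : Set (Set α)) (e : Z → α → ℝ) : UniformSpace Z :=
  UniformSpace.comap (fun x => UniformOnFun.ofFun 𝔖 (e x)) (UniformOnFun.uniformSpace α ℝ 𝔖)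

theorem continuous_unifOn {K : Set α} (hK : K ∈ 𝔖) {f : α} (hf : f ∈ K) :
    @Continuous Z ℝ (unifOn 𝔖 e).toTopologicalSpace _ (fun x => e x f) :=
  let _ : UniformSpace Z := unifOn 𝔖 e
  ((UniformOnFun.uniformContinuous_eval_of_mem ℝ 𝔖 hf hK).comp
    (uniformContinuous_comap (f := fun x => UniformOnFun.ofFun 𝔖 (e x)))).continuous

theorem isClosed_unifOn_forall_abs_le (c : Set α → ℝ) :
    @IsClosed Z (unifOn 𝔖 e).toTopologicalSpace {x | ∀ K ∈ 𝔖, ∀ f ∈ K, |e x f| ≤ c K} := by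
  let _ : UniformSpace Z := unifOn 𝔖 e
  simp only [ofPred_forall]
  exact isClosed_biInter fun K hK => isClosed_biInter fun f hf =>
    isClosed_le (continuous_unifOn hK hf).abs continuous_const

theorem hasBasis_comap_ofFun (hne : 𝔖.Nonempty) (hdir : DirectedOn (· ⊆ ·) 𝔖) (φ : α → ℝ) :
    (comap (fun x => UniformOnFun.ofFun 𝔖 (e x)) (𝓝 (UniformOnFun.ofFun 𝔖 φ))).HasBasis
      (fun i : Set α × ℝ => i.1 ∈ 𝔖 ∧ 0 < i.2) fun i => {x | ∀ f ∈ i.1, |e x f - φ f| < i.2} :=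
  (UniformOnFun.hasBasis_nhds_of_basis α ℝ 𝔖 (UniformOnFun.ofFun 𝔖 φ) hne hdir
    Metric.uniformity_basis_dist).comap _

theorem exists_forall_eq_of_isComplete (hne : 𝔖.Nonempty) (hdir : DirectedOn (· ⊆ ·) 𝔖) {S : Set Z}
    (hS : @IsComplete Z (unifOn 𝔖 e) S) {φ : α → ℝ}
    (hφ : ∀ K ∈ 𝔖, ∀ ε : ℝ, 0 < ε → ∃ x ∈ S, ∀ f ∈ K, |e x f - φ f| < ε) :
    ∃ x ∈ S, ∀ K ∈ 𝔖, ∀ f ∈ K, e x f = φ f := by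
  let _ : UniformSpace Z := unifOn 𝔖 e
  let ι : Z → UniformOnFun α ℝ 𝔖 := fun x => UniformOnFun.ofFun 𝔖 (e x)
  let l : Filter Z := comap ι (𝓝 (UniformOnFun.ofFun 𝔖 φ))
  have hlS : (l ⊓ 𝓟 S).NeBot := by
    rw [((hasBasis_comap_ofFun hne hdir φ).inf_principal S).neBot_iff]
    rintro ⟨K, ε⟩ ⟨hK, hε⟩
    obtain ⟨x, hxS, hx⟩ := hφ K hK ε hε
    exact ⟨x, hx, hxS⟩
  have hcauchy : Cauchy l := cauchy_nhds.comap' le_rfl (hlS.mono inf_le_left)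
  obtain ⟨x, hxS, hx⟩ := hS _ (hcauchy.mono inf_le_left) inf_le_right
  refine ⟨x, hxS, fun K hK f hf => ?_⟩
  have htendsto_x : Tendsto (fun z => e z f) (l ⊓ 𝓟 S) (𝓝 (e x f)) :=
    ((continuous_unifOn hK hf).tendsto x).mono_left hx
  have htendsto_φ : Tendsto (fun z => e z f) (l ⊓ 𝓟 S) (𝓝 (φ f)) :=
    (((UniformOnFun.uniformContinuous_eval_of_mem ℝ 𝔖 hf hK).continuous.tendsto _).comp
      tendsto_comap).mono_left inf_le_left
  exact tendsto_nhds_unique htendsto_x htendsto_φ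

end UniformConvergence

section Mackey

variable {X : Type*} [NormedAddCommGroup X] [NormedSpace ℝ X] {Y : Submodule ℝ (X →L[ℝ] ℝ)}

theorem isCompact_weakStarTop_iff {K : Set (X →L[ℝ] ℝ)} :
    @IsCompact _ (weakStarTop X) K ↔ IsCompact (WeakDual.toStrongDual (𝕜 := ℝ) (E := X) ⁻¹' K) :=
  Iff.rfl

theorem mackeyFamily_nonempty : (mackeyFamily Y).Nonempty :=
  ⟨∅, empty_subset _, convex_empty, balanced_empty, @isCompact_empty _ (weakStarTop X)⟩

open scoped Pointwise in
theorem directedOn_mackeyFamily : DirectedOn (· ⊆ ·) (mackeyFamily Y) := by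
  rintro K hK L hL
  rcases K.eq_empty_or_nonempty with rfl | hKne
  · exact ⟨L, hL, empty_subset _, subset_rfl⟩
  rcases L.eq_empty_or_nonempty with rfl | hLne
  · exact ⟨K, hK, subset_rfl, empty_subset _⟩
  obtain ⟨hKY, hKc, hKb, hKk⟩ := hK
  obtain ⟨hLY, hLc, hLb, hLk⟩ := hL
  refine ⟨K + L, ⟨?_, hKc.add hLc, Balanced.add (𝕜 := ℝ) hKb hLb, ?_⟩,
    subset_add_left K (Balanced.zero_mem (𝕜 := ℝ) hLb hLne),
    subset_add_right L (Balanced.zero_mem (𝕜 := ℝ) hKb hKne)⟩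
  · rintro _ ⟨f, hf, g, hg, rfl⟩
    exact Y.add_mem (hKY hf) (hLY hg)
  · rw [isCompact_weakStarTop_iff] at hKk hLk ⊢
    rw [preimage_add (WeakDual.toStrongDual (𝕜 := ℝ) (E := X)) WeakDual.toStrongDual.injective
      (by simp) (by simp)]
    exact hKk.add hLk

theorem exists_mem_mackeyFamily {f : X →L[ℝ] ℝ} (hf : f ∈ Y) : ∃ K ∈ mackeyFamily Y, f ∈ K := by
  let L : ℝ →ₗ[ℝ] X →L[ℝ] ℝ := LinearMap.toSpanSingleton ℝ _ f
  have hL : Continuous (WeakDual.toStrongDual.symm ∘ L) :=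
    WeakDual.continuous_of_continuous_eval fun x => continuous_id.mul continuous_const
  refine ⟨L '' Metric.closedBall 0 1, ⟨?_, ?_, ?_, ?_⟩, 1, by simp, one_smul ℝ f⟩
  · exact image_subset_iff.2 fun t _ => Y.smul_mem t hf
  · exact (convex_closedBall 0 1).linear_image L
  · rintro a ha _ ⟨_, ⟨t, ht, rfl⟩, rfl⟩
    exact ⟨a • t, balanced_closedBall_zero.smul_mem ha ht, map_smul L a t⟩
  · exact isCompact_weakStarTop_iff.2 ((isCompact_closedBall 0 1).image hL)

theorem isVonNBounded_mackeyTop (c : Set (X →L[ℝ] ℝ) → ℝ) :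
    @Bornology.IsVonNBounded ℝ X _ _ _ (mackeyTop Y)
      {x | ∀ K ∈ mackeyFamily Y, ∀ f ∈ K, |f x| ≤ c K} := by
  intro V hV
  have hbasis := hasBasis_comap_ofFun (e := fun (x : X) (f : X →L[ℝ] ℝ) => f x)
    mackeyFamily_nonempty (directedOn_mackeyFamily (Y := Y)) (fun f => f 0)
  obtain ⟨⟨K, ε⟩, ⟨hK, hε⟩, hsub⟩ := hbasis.mem_iff.1 (by rwa [← nhds_induced])
  simp only [map_zero, sub_zero] at hε hsub
  rw [absorbs_iff_eventually_cobounded_mapsTo]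
  have hlarge : ∀ᶠ a : ℝ in Bornology.cobounded ℝ, |c K| / ε < ‖a‖ :=
    tendsto_norm_cobounded_atTop.eventually (eventually_gt_atTop _)
  filter_upwards [hlarge] with a ha x hx
  refine hsub fun f hf => ?_
  have hapos : 0 < |a| := lt_of_le_of_lt (by positivity) ha
  rw [map_smul, smul_eq_mul, abs_mul, abs_inv, inv_mul_lt_iff₀ hapos]
  calc |f x| ≤ |c K| := (hx K hK f hf).trans (le_abs_self _)
    _ < |a| * ε := (div_lt_iff₀ hε).1 ha

/-- The Mackey topology `μ(X, Y)` is quasi-complete. -/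
def IsMackeyQuasiComplete (Y : Submodule ℝ (X →L[ℝ] ℝ)) : Prop :=
  ∀ S : Set X, @IsClosed X (mackeyTop Y) S →
    @Bornology.IsVonNBounded ℝ X _ _ _ (mackeyTop Y) S → @IsComplete X (mackeyUniformity Y) S

theorem exists_forall_abs_le_of_mem_mackeyFamily {C : Set X}
    (hC : ∀ f ∈ Y, ∃ c, ∀ x ∈ C, |f x| ≤ c) {K : Set (X →L[ℝ] ℝ)} (hK : K ∈ mackeyFamily Y) :
    ∃ c, ∀ f ∈ K, ∀ x ∈ C, |f x| ≤ c := by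
  let e : WeakDual ℝ X →ₗ[ℝ] C → ℝ :=
    LinearMap.pi fun x => (topDualPairing ℝ X).flip x ∘ₗ WeakDual.toStrongDual.toLinearMap
  have he : Continuous e := continuous_pi fun x => WeakDual.eval_continuous (x : X)
  obtain ⟨c, hc⟩ := exists_forall_abs_le_of_isCompact he
    (isCompact_weakStarTop_iff.1 hK.2.2.2)
    (hK.2.1.linear_preimage WeakDual.toStrongDual.toLinearMap) fun f hf =>
    let ⟨c, hc⟩ := hC f (hK.1 hf)
    ⟨c, fun x => hc x x.2⟩
  exact ⟨c, fun f hf x hx => hc f hf ⟨x, hx⟩⟩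

variable {C : Set X} (hatt : ∀ f ∈ Y, ∃ x ∈ C, ∀ y ∈ C, f y ≤ f x)
include hatt

theorem exists_forall_abs_le_of_attains {f : X →L[ℝ] ℝ} (hf : f ∈ Y) :
    ∃ c, ∀ x ∈ C, |f x| ≤ c := by
  obtain ⟨x, -, hx⟩ := hatt f hf
  obtain ⟨y, -, hy⟩ := hatt (-f) (Y.neg_mem hf)
  exact ⟨max (f x) ((-f) y), fun z hz => abs_le'.2
    ⟨le_max_of_le_left (hx z hz), le_max_of_le_right (hy z hz)⟩⟩

variable {l : Filter X} [l.NeBot] (hl : l ≤ 𝓟 C) {φ : (X →L[ℝ] ℝ) → ℝ}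
  (hφ : ∀ f ∈ Y, Tendsto f l (𝓝 (φ f)))
include hl hφ

theorem exists_mem_convexHull_forall_abs_sub_lt_of_mem_mackeyFamily {K : Set (X →L[ℝ] ℝ)}
    (hK : K ∈ mackeyFamily Y) {ε : ℝ} (hε : 0 < ε) :
    ∃ x ∈ convexHull ℝ C, ∀ f ∈ K, |f x - φ f| < ε := by
  obtain ⟨hKY, hKc, hKb, hKk⟩ := hK
  let W : Submodule ℝ (WeakDual ℝ X) := Y.comap WeakDual.toStrongDual.toLinearMap
  let ι : W →ₗ[ℝ] X →L[ℝ] ℝ := WeakDual.toStrongDual.toLinearMap ∘ₗ W.subtype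
  let φW : W →ₗ[ℝ] ℝ :=
    { toFun := fun f => φ (ι f)
      map_add' := fun f g =>
        tendsto_nhds_unique (hφ _ (f + g).2) ((hφ _ f.2).add (hφ _ g.2))
      map_smul' := fun a f =>
        tendsto_nhds_unique (hφ _ (a • f).2) ((hφ _ f.2).const_mul a) }
  have hKneg : ∀ f ∈ K, -f ∈ K := fun f hf => hKb.neg_mem_iff.2 hf
  have hKW : IsCompact (ι ⁻¹' K) :=
    ((IsInducing.subtypeVal (t := (W : Set (WeakDual ℝ X)))).isCompact_preimage_iff
      fun f hf => ⟨⟨f, hKY hf⟩, rfl⟩).2 (isCompact_weakStarTop_iff.1 hKk)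
  obtain ⟨x, hx, hlt⟩ := exists_mem_convexHull_forall_abs_sub_lt
    (B := topDualPairing ℝ X ∘ₗ ι) (φ := φW)
    (fun x => (WeakDual.eval_continuous x).comp continuous_subtype_val)
    (fun f => (ι f).continuous) (fun f => hatt _ f.2) hl (fun f => hφ _ f.2) hKW
    (hKc.linear_preimage ι) (fun f hf => hKneg _ hf) hε
  exact ⟨x, hx, fun f hf => hlt ⟨WeakDual.toStrongDual.symm f, hKY hf⟩ hf⟩

theorem IsMackeyQuasiComplete.exists_forall_eq_of_tendsto (hY : IsMackeyQuasiComplete Y) :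
    ∃ x, ∀ f ∈ Y, f x = φ f := by
  choose! c hc using fun K (hK : K ∈ mackeyFamily Y) =>
    exists_forall_abs_le_of_mem_mackeyFamily
      (fun f hf => exists_forall_abs_le_of_attains hatt hf) hK
  let S : Set X := {x | ∀ K ∈ mackeyFamily Y, ∀ f ∈ K, |f x| ≤ c K}
  have hSconv : Convex ℝ S := by
    simp only [S, ofPred_forall, abs_le]
    exact convex_iInter₂ fun K _ => convex_iInter₂ fun f _ =>
      (convex_Icc (-c K) (c K)).linear_preimage f.toLinearMap
  have hCS : convexHull ℝ C ⊆ S := convexHull_min (fun x hx K hK f hf => hc K hK f hf x hx) hSconv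
  have hS := hY S (isClosed_unifOn_forall_abs_le c) (isVonNBounded_mackeyTop c)
  obtain ⟨x, -, hx⟩ := exists_forall_eq_of_isComplete mackeyFamily_nonempty directedOn_mackeyFamily
    hS fun K hK ε hε =>
      let ⟨x, hxC, hx⟩ :=
        exists_mem_convexHull_forall_abs_sub_lt_of_mem_mackeyFamily hatt hl hφ hK hε
      ⟨x, hCS hxC, hx⟩
  refine ⟨x, fun f hf => ?_⟩
  obtain ⟨K, hK, hfK⟩ := exists_mem_mackeyFamily hf
  exact hx K hK f hfK

end Mackey

section SigmaTop

variable {X : Type*} [NormedAddCommGroup X] [NormedSpace ℝ X] {Y : Submodule ℝ (X →L[ℝ] ℝ)}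

theorem isInducing_sigmaTop (Y : Set (X →L[ℝ] ℝ)) :
    @IsInducing X (Y → ℝ) (sigmaTop Y) _ fun x f => (f : X →L[ℝ] ℝ) x :=
  @IsInducing.mk _ _ (sigmaTop Y) _ _ rfl

theorem continuous_sigmaTop {Y : Set (X →L[ℝ] ℝ)} {f : X →L[ℝ] ℝ} (hf : f ∈ Y) :
    @Continuous X ℝ (sigmaTop Y) _ f :=
  let _ : TopologicalSpace X := sigmaTop Y
  (continuous_apply (A := fun _ => ℝ) (⟨f, hf⟩ : Y)).comp (isInducing_sigmaTop Y).continuous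

theorem IsMackeyQuasiComplete.isCompact_of_attains (hY : IsMackeyQuasiComplete Y)
    {C : Set X} (hC : @IsClosed X (sigmaTop (Y : Set (X →L[ℝ] ℝ))) C)
    (hatt : ∀ f ∈ Y, ∃ x ∈ C, ∀ y ∈ C, f y ≤ f x) :
    @IsCompact X (sigmaTop (Y : Set (X →L[ℝ] ℝ))) C := by
  let _ : TopologicalSpace X := sigmaTop (Y : Set (X →L[ℝ] ℝ))
  refine isCompact_iff_ultrafilter_le_nhds.2 fun U hU => ?_
  have hlim : ∀ f ∈ Y, ∃ a : ℝ, Tendsto f U (𝓝 a) := fun f hf => by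
    obtain ⟨c, hc⟩ := exists_forall_abs_le_of_attains hatt hf
    obtain ⟨a, -, ha⟩ := (isCompact_Icc (a := -c) (b := c)).ultrafilter_le_nhds (U.map f)
      (tendsto_principal.2 (mem_of_superset (hU (mem_principal_self C)) fun x hx =>
        abs_le.1 (hc x hx)))
    exact ⟨a, ha⟩
  choose! φ hφ using hlim
  obtain ⟨x, hx⟩ := hY.exists_forall_eq_of_tendsto hatt hU hφ
  have hUx : (U : Filter X) ≤ 𝓝 x := by
    rw [(isInducing_sigmaTop _).nhds_eq_comap, ← tendsto_iff_comap, tendsto_pi_nhds]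
    exact fun f => (hx f f.2).symm ▸ hφ f f.2
  exact ⟨x, hC.mem_of_tendsto hUx (hU (mem_principal_self C)), hUx⟩

end SigmaTop

/-! ### Maxima of signed measures -/

section Hahn

variable {Ω : Type*} [MeasurableSpace Ω]

namespace CountablyAdditive

variable {E : Type*} [AddCommGroup E] [TopologicalSpace E] [IsTopologicalAddGroup E] [T2Space E]
  {ν : Set Ω → E} (hν : CountablyAdditive ν)
include hν

theorem empty : ν ∅ = 0 := by
  have hsum := hν (fun _ => ∅) (fun _ => .empty) fun _ _ _ => disjoint_bot_left
  exact tendsto_const_nhds_iff.1 hsum.summable.tendsto_atTop_zero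

open Classical in
/-- The vector measure given by a countably additive set function, whose values on non-measurable
sets are discarded. -/
noncomputable def toVectorMeasure : MeasureTheory.VectorMeasure Ω E where
  measureOf' A := if MeasurableSet A then ν A else 0
  empty' := by simp [hν.empty]
  not_measurable' _ hA := if_neg hA
  m_iUnion' A hA hdisj := by simpa only [hA, MeasurableSet.iUnion hA, if_true] using hν A hA hdisj

theorem toVectorMeasure_apply {A : Set Ω} (hA : MeasurableSet A) : hν.toVectorMeasure A = ν A :=
  if_pos hA

end CountablyAdditive

theorem exists_measurableSet_forall_signedMeasure_le (s : MeasureTheory.SignedMeasure Ω) :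
    ∃ P, MeasurableSet P ∧ ∀ A, MeasurableSet A → s A ≤ s P := by
  obtain ⟨P, hP, hpos, hneg⟩ := s.exists_compl_positive_negative
  refine ⟨P, hP, fun A hA => ?_⟩
  have hPA : 0 ≤ s (P \ A) :=
    MeasureTheory.VectorMeasure.subset_le_of_restrict_le_restrict _ _ hP hpos sdiff_subset
  have hAP : s (A \ P) ≤ 0 :=
    MeasureTheory.VectorMeasure.subset_le_of_restrict_le_restrict _ _ hP.compl hneg
      fun _ hx => hx.2
  calc s A = s (A ∩ P) + s (A \ P) := by
        rw [← s.of_add_of_sdiff (hA.inter hP) hA inter_subset_left, sdiff_self_inter]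
    _ ≤ s (A ∩ P) + s (P \ A) := by linarith
    _ = s P := by
        rw [← s.of_add_of_sdiff (hA.inter hP) hP inter_subset_right, inter_comm, sdiff_self_inter]

theorem CountablyAdditive.exists_measurableSet_forall_le {ν : Set Ω → ℝ}
    (hν : CountablyAdditive ν) :
    ∃ P, MeasurableSet P ∧ ∀ A, MeasurableSet A → ν A ≤ ν P := by
  obtain ⟨P, hP, hmax⟩ := exists_measurableSet_forall_signedMeasure_le hν.toVectorMeasure
  refine ⟨P, hP, fun A hA => ?_⟩
  simpa only [hν.toVectorMeasure_apply, hA, hP] using hmax A hA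

end Hahn

section SupportFn

variable {X : Type*} [NormedAddCommGroup X] [NormedSpace ℝ X] {Y : Submodule ℝ (X →L[ℝ] ℝ)}
  {f : X →L[ℝ] ℝ} {C : Set X}

theorem le_supportFn_of_isCompact_closure (hf : f ∈ Y)
    (hC : @IsCompact X (sigmaTop (Y : Set (X →L[ℝ] ℝ)))
      (@closure X (sigmaTop (Y : Set (X →L[ℝ] ℝ))) C)) {x : X} (hx : x ∈ C) :
    f x ≤ supportFn f C := by
  let _ : TopologicalSpace X := sigmaTop (Y : Set (X →L[ℝ] ℝ))
  have hbdd := hC.bddAbove_image (continuous_sigmaTop hf).continuousOn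
  exact le_csSup (hbdd.mono (image_mono subset_closure)) (mem_image_of_mem f hx)

theorem exists_mem_closure_supportFn_le (hf : f ∈ Y) (hne : C.Nonempty)
    (hC : @IsCompact X (sigmaTop (Y : Set (X →L[ℝ] ℝ)))
      (@closure X (sigmaTop (Y : Set (X →L[ℝ] ℝ))) C)) :
    ∃ x ∈ @closure X (sigmaTop (Y : Set (X →L[ℝ] ℝ))) C, supportFn f C ≤ f x := by
  let _ : TopologicalSpace X := sigmaTop (Y : Set (X →L[ℝ] ℝ))
  obtain ⟨x, hx, hmax⟩ := hC.exists_isMaxOn hne.closure (continuous_sigmaTop hf).continuousOn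
  exact ⟨x, hx, csSup_le (hne.image f) (forall_mem_image.2 fun y hy => hmax (subset_closure hy))⟩

end SupportFn

theorem statement11_general {Ω X : Type*} [MeasurableSpace Ω]
    [NormedAddCommGroup X] [NormedSpace ℝ X]
    (Y : Submodule ℝ (X →L[ℝ] ℝ))
    (hqc : ∀ S : Set X, @IsClosed X (mackeyTop Y) S →
      @Bornology.IsVonNBounded ℝ X _ _ _ (mackeyTop Y) S →
      @IsComplete X (mackeyUniformity Y) S)
    (M : Set Ω → Set X)
    (hne : ∀ A : Set Ω, MeasurableSet A → (M A).Nonempty)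
    (hcpt : ∀ A : Set Ω, MeasurableSet A →
      @IsCompact X (sigmaTop (Y : Set (X →L[ℝ] ℝ)))
        (@closure X (sigmaTop (Y : Set (X →L[ℝ] ℝ))) (M A)))
    (hca : ∀ f ∈ Y, CountablyAdditive (fun A => supportFn f (M A))) :
    @IsCompact X (sigmaTop (Y : Set (X →L[ℝ] ℝ)))
      (@closure X (sigmaTop (Y : Set (X →L[ℝ] ℝ)))
        (⋃ (A : Set Ω) (_ : MeasurableSet A), M A)) := by
  let _ : TopologicalSpace X := sigmaTop (Y : Set (X →L[ℝ] ℝ))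
  refine IsMackeyQuasiComplete.isCompact_of_attains hqc isClosed_closure fun f hf => ?_
  obtain ⟨P, hP, hmax⟩ := (hca f hf).exists_measurableSet_forall_le
  obtain ⟨x, hx, hPx⟩ := exists_mem_closure_supportFn_le hf (hne P hP) (hcpt P hP)
  refine ⟨x, closure_mono (subset_iUnion₂_of_subset P hP subset_rfl) hx, ?_⟩
  suffices hle : ∀ y ∈ ⋃ (A : Set Ω) (_ : MeasurableSet A), M A, f y ≤ f x from
    closure_minimal hle (isClosed_le (continuous_sigmaTop hf) continuous_const)
  intro y hy
  obtain ⟨A, hA, hyA⟩ := mem_iUnion₂.1 hy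
  calc f y ≤ supportFn f (M A) := le_supportFn_of_isCompact_closure hf (hcpt A hA) hyA
    _ ≤ supportFn f (M P) := hmax A hA
    _ ≤ f x := hPx

/-- Let `X` be a Banach space and `Y ⊆ X*` a total linear subspace
such that `(X, μ(X,Y))` is quasi-complete (every `μ(X,Y)`-closed, `μ(X,Y)`-bounded set
is complete). If `M : Σ → b(X)` has relatively `σ(X,Y)`-compact values and `s(x*, M)`
is countably additive for every `x* ∈ Y`, then `⋃_{A ∈ Σ} M(A)` is relatively
`σ(X,Y)`-compact. -/
theorem statement11 {Ω X : Type*} [MeasurableSpace Ω]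
    [NormedAddCommGroup X] [NormedSpace ℝ X] [CompleteSpace X]
    (Y : Submodule ℝ (X →L[ℝ] ℝ))
    (hYtotal : ∀ x : X, (∀ f ∈ Y, f x = 0) → x = 0)
    (hqc : ∀ S : Set X, @IsClosed X (mackeyTop Y) S →
      @Bornology.IsVonNBounded ℝ X _ _ _ (mackeyTop Y) S →
      @IsComplete X (mackeyUniformity Y) S)
    (M : Set Ω → Set X)
    (hne : ∀ A : Set Ω, MeasurableSet A → (M A).Nonempty)
    (hbd : ∀ A : Set Ω, MeasurableSet A → Bornology.IsBounded (M A))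
    (hcpt : ∀ A : Set Ω, MeasurableSet A →
      @IsCompact X (sigmaTop (Y : Set (X →L[ℝ] ℝ)))
        (@closure X (sigmaTop (Y : Set (X →L[ℝ] ℝ))) (M A)))
    (hca : ∀ f ∈ Y, CountablyAdditive (fun A => supportFn f (M A))) :
    @IsCompact X (sigmaTop (Y : Set (X →L[ℝ] ℝ)))
      (@closure X (sigmaTop (Y : Set (X →L[ℝ] ℝ)))
        (⋃ (A : Set Ω) (_ : MeasurableSet A), M A)) := by
  exact statement11_general Y hqc M hne hcpt hca
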